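/- Let (X,d) be a compact metric space, f: X → X a continuous map, and K ⊆ M_f(X) a nonempty compact connected subset. Then for every ε > 0, h_top^B(G_K,f,ε) ≤ inf_{μ∈K} inf_{ξ: diam ξ < ε} h_μ(f,ξ), where the inner infimum is over all finite measurable partitions ξ of X with diam ξ < ε. -/

import Mathlib

open MeasureTheory Filter Set Topology
open scoped ENNReal NNReal

noncomputable section

namespace MMD

variable {X : Type*}

/-! ### Bowen balls, Bowen topological entropy and metric mean dimension -/

/-- The Bowen ball `B_n(x,ε) = {y | d_n(x,y) < ε}` where `d_n` is the Bowen metric. -/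
def bowenBall [PseudoMetricSpace X] (f : X → X) (x : X) (n : ℕ) (ε : ℝ) : Set X :=
  {y | ∀ i < n, dist (f^[i] x) (f^[i] y) < ε}

/-- The weight sum `Σ_{(x,n) ∈ C} exp (-s n)` of a (countable) collection of Bowen balls,
encoded by its set of centers/lengths. -/
def coverSum (s : ℝ) (C : Set (X × ℕ)) : ℝ≥0∞ :=
  ∑' p : C, ENNReal.ofReal (Real.exp (-s * ((p : X × ℕ).2 : ℝ)))

/-- `m(Z,s,N,ε,f)`: infimum over countable (or finite) covers of `Z` by Bowen balls
`B_{n_i}(x_i,ε)` with `n_i ≥ N` of `Σ exp (-s n_i)`. -/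
def mB [PseudoMetricSpace X] (f : X → X) (Z : Set X) (s : ℝ) (N : ℕ) (ε : ℝ) : ℝ≥0∞ :=
  ⨅ (C : Set (X × ℕ)) (_ : C.Countable) (_ : ∀ p ∈ C, N ≤ p.2)
    (_ : Z ⊆ ⋃ p ∈ C, bowenBall f p.1 p.2 ε), coverSum s C

/-- `m(Z,s,ε) = lim_{N→∞} m(Z,s,N,ε,f)`; the limit of this monotone quantity is the sup. -/
def mBLim [PseudoMetricSpace X] (f : X → X) (Z : Set X) (s : ℝ) (ε : ℝ) : ℝ≥0∞ :=
  ⨆ N : ℕ, mB f Z s N ε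

/-- The Bowen topological entropy of `Z` at scale `ε`:
`h_top^B(Z,f,ε) = inf {s | m(Z,s,ε) = 0}`. -/
def hB [PseudoMetricSpace X] (f : X → X) (Z : Set X) (ε : ℝ) : ℝ :=
  sInf {s : ℝ | mBLim f Z s ε = 0}

/-- Upper Bowen metric mean dimension of `Z`. -/
def mdimUpper [PseudoMetricSpace X] (f : X → X) (Z : Set X) : ℝ :=
  limsup (fun ε : ℝ => hB f Z ε / |Real.log ε|) (𝓝[>] (0:ℝ))

/-- Lower Bowen metric mean dimension of `Z`. -/
def mdimLower [PseudoMetricSpace X] (f : X → X) (Z : Set X) : ℝ :=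
  liminf (fun ε : ℝ => hB f Z ε / |Real.log ε|) (𝓝[>] (0:ℝ))

/-! ### Finite measurable partitions and measure-theoretic entropy -/

/-- `P` is a finite measurable partition of `X` (mod `μ`): its elements are measurable,
they cover `X` up to a `μ`-null set, and they pairwise intersect in `μ`-null sets. -/
def IsPartition [MeasurableSpace X] (μ : Measure X) (P : Finset (Set X)) : Prop :=
  (∀ A ∈ P, MeasurableSet A) ∧ μ (Set.univ \ ⋃ A ∈ P, A) = 0 ∧
    ∀ A ∈ P, ∀ B ∈ P, A ≠ B → μ (A ∩ B) = 0

/-- Static entropy `H_μ(P) = -Σ_{A∈P} μ(A) log μ(A)`. -/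
def partEnt [MeasurableSpace X] (μ : Measure X) (P : Finset (Set X)) : ℝ :=
  ∑ A ∈ P, Real.negMulLog ((μ A).toReal)

/-- Join (common refinement) of two finite families of sets. -/
def joinParts (P Q : Finset (Set X)) : Finset (Set X) :=
  letI := Classical.decEq (Set X)
  (P ×ˢ Q).image fun p => p.1 ∩ p.2

/-- `dynJoin f P n = ⋁_{j=0}^{n-1} f^{-j} P`. -/
def dynJoin (f : X → X) (P : Finset (Set X)) : ℕ → Finset (Set X)
  | 0 => {Set.univ}
  | n + 1 =>
      letI := Classical.decEq (Set X)
      joinParts P ((dynJoin f P n).image fun A => f ⁻¹' A)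

/-- Measure-theoretic entropy of `f` w.r.t. the partition `P`:
`h_μ(f,P) = lim_n (1/n) H_μ(⋁_{j<n} f^{-j}P)` (the limit exists, hence equals the `limsup`). -/
def dynEnt [MeasurableSpace X] (μ : Measure X) (f : X → X) (P : Finset (Set X)) : ℝ :=
  limsup (fun n : ℕ => partEnt μ (dynJoin f P n) / n) atTop

/-- `diam P < ε`, i.e. every element of `P` has diameter `< ε`. -/
def partDiamLt [PseudoMetricSpace X] (P : Finset (Set X)) (ε : ℝ) : Prop :=
  ∀ A ∈ P, Metric.diam A < ε

/-- `inf_{ξ : diam ξ < ε} h_μ(f,ξ)`, the infimum over all finite measurable partitions of `X`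
with diameter `< ε`. -/
def infEnt [PseudoMetricSpace X] [MeasurableSpace X] (μ : Measure X) (f : X → X) (ε : ℝ) : ℝ :=
  sInf (dynEnt μ f '' {P : Finset (Set X) | IsPartition μ P ∧ partDiamLt P ε})

/-! ### Empirical measures, generic points and saturated sets -/

/-- The `n`-th empirical measure `E_n(x) = (1/n) Σ_{j<n} δ_{f^j x}` (defined as `E_1(x)`
for `n = 0`, a junk value). -/
def empMeasure [MeasurableSpace X] (f : X → X) (x : X) (n : ℕ) : Measure X :=
  ((max n 1 : ℕ) : ℝ≥0∞)⁻¹ • ∑ j ∈ Finset.range (max n 1), Measure.dirac (f^[j] x)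

instance [MeasurableSpace X] (f : X → X) (x : X) (n : ℕ) :
    IsProbabilityMeasure (empMeasure f x n) := by
  constructor
  have h1 : (0:ℕ) < max n 1 := lt_of_lt_of_le one_pos (le_max_right n 1)
  have hsum : (∑ j ∈ Finset.range (max n 1), Measure.dirac (f^[j] x)) Set.univ
      = ((max n 1 : ℕ) : ℝ≥0∞) := by
    rw [Measure.finset_sum_apply]
    simp
  simp only [empMeasure, Measure.smul_apply, smul_eq_mul, hsum]
  exact ENNReal.inv_mul_cancel (by exact_mod_cast h1.ne') (by simp)

/-- The `n`-th empirical measure as a probability measure. -/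
def empProb [MeasurableSpace X] (f : X → X) (x : X) (n : ℕ) : ProbabilityMeasure X :=
  ⟨empMeasure f x n, inferInstance⟩

/-- `V_f(x)`: the set of weak* limit points of the sequence of empirical measures of `x`. -/
def Vf [MetricSpace X] [MeasurableSpace X] [BorelSpace X] (f : X → X) (x : X) :
    Set (ProbabilityMeasure X) :=
  {ν | MapClusterPt ν atTop (empProb f x)}

/-- The saturated set `G_K = {x | V_f(x) = K}`. -/
def GK [MetricSpace X] [MeasurableSpace X] [BorelSpace X] (f : X → X)
    (K : Set (ProbabilityMeasure X)) : Set X :=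
  {x | Vf f x = K}

/-- The generic set `G_μ = {x | V_f(x) = {μ}}`. -/
def genSet [MetricSpace X] [MeasurableSpace X] [BorelSpace X] (f : X → X)
    (μ : ProbabilityMeasure X) : Set X :=
  GK f {μ}

/-! ### Invariant measures, supports, measure center, omega-limit sets -/

/-- `μ` is an `f`-invariant (Borel probability) measure. -/
def InvariantProb [MeasurableSpace X] (f : X → X) (μ : ProbabilityMeasure X) : Prop :=
  Measure.map f (μ : Measure X) = (μ : Measure X)

/-- The set `M_f(X)` of invariant probability measures. -/
def invSet [MeasurableSpace X] (f : X → X) : Set (ProbabilityMeasure X) :=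
  {μ | InvariantProb f μ}

/-- The support of a measure: points all of whose neighborhoods have positive measure. -/
def measSupport [TopologicalSpace X] [MeasurableSpace X] (μ : Measure X) : Set X :=
  {x | ∀ U ∈ 𝓝 x, 0 < μ U}

/-- The measure center `C_f(X) = closure (⋃_{μ ∈ M_f(X)} S_μ)`. -/
def measCenter [TopologicalSpace X] [MeasurableSpace X] (f : X → X) : Set X :=
  closure (⋃ μ ∈ invSet f, measSupport (μ : Measure X))

/-- The omega-limit set `ω_f(x) = ⋂_n closure {f^k x : k ≥ n}`. -/
def omegaSet [TopologicalSpace X] (f : X → X) (x : X) : Set X :=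
  ⋂ n : ℕ, closure {y | ∃ k, n ≤ k ∧ f^[k] x = y}

/-- The set of points whose omega-limit set contains the measure center. -/
def CtrSet [TopologicalSpace X] [MeasurableSpace X] (f : X → X) : Set X :=
  {x | measCenter f ⊆ omegaSet f x}

/-! ### Blow-up functions and the g-almost product property -/

/-- A blowup function: nondecreasing, unbounded, `g n < n` and `g n / n → 0`. -/
structure IsBlowup (g : ℕ → ℕ) : Prop where
  mono : Monotone g
  unbounded : ∀ C : ℕ, ∃ n, C < g n
  lt_self : ∀ n, 0 < n → g n < n
  ratio_tendsto_zero : Tendsto (fun n : ℕ => (g n : ℝ) / n) atTop (𝓝 0)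

/-- The g-blowup `B_n(g;x,ε)` of the Bowen ball `B_n(x,ε)`. -/
def blowupBall [PseudoMetricSpace X] (f : X → X) (g : ℕ → ℕ) (x : X) (n : ℕ) (ε : ℝ) :
    Set X :=
  {y | ∃ Λ : Finset ℕ, Λ ⊆ Finset.range n ∧
    letI := Classical.decEq ℕ
    (Finset.range n \ Λ).card ≤ g n ∧ ∀ j ∈ Λ, dist (f^[j] x) (f^[j] y) ≤ ε}

/-- The g-almost product property. -/
def GAlmostProduct [PseudoMetricSpace X] (f : X → X) (g : ℕ → ℕ) : Prop :=
  ∃ m : ℝ → ℕ, (∀ s t : ℝ, 0 < s → s ≤ t → m t ≤ m s) ∧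
    ∀ (k : ℕ) (x : ℕ → X) (ε : ℕ → ℝ) (n : ℕ → ℕ),
      (∀ j < k, 0 < ε j) → (∀ j < k, m (ε j) ≤ n j) →
      (⋂ j ∈ Finset.range k,
        (f^[∑ i ∈ Finset.range j, n i] ⁻¹' blowupBall f g (x j) (n j) (ε j))).Nonempty

/-! ### Separated sets and Pfister–Sullivan quantities -/

/-- The number of times `0 ≤ j < n` at which the orbits of `x` and `y` are `ε`-apart. -/
def sepCount [PseudoMetricSpace X] (f : X → X) (x y : X) (n : ℕ) (ε : ℝ) : ℕ :=
  letI := Classical.decPred fun j : ℕ => ε < dist (f^[j] x) (f^[j] y)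
  ((Finset.range n).filter fun j => ε < dist (f^[j] x) (f^[j] y)).card

/-- `N(F; δ, n, ε)`: maximal cardinality of a `(δ,n,ε)`-separated subset of
`X_{n,F} = {x | E_n(x) ∈ F}`. -/
def NsepD [MetricSpace X] [MeasurableSpace X] [BorelSpace X] (f : X → X)
    (F : Set (ProbabilityMeasure X)) (δ : ℝ) (n : ℕ) (ε : ℝ) : ℕ :=
  sSup {c : ℕ | ∃ E : Finset X, (↑E : Set X) ⊆ {x | empProb f x n ∈ F} ∧
    (∀ x ∈ E, ∀ y ∈ E, x ≠ y → δ * n ≤ (sepCount f x y n ε : ℝ)) ∧ E.card = c}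

/-- `N(F; n, ε)`: maximal cardinality of an `(n,ε)`-separated subset of `X_{n,F}`. -/
def NsepP [MetricSpace X] [MeasurableSpace X] [BorelSpace X] (f : X → X)
    (F : Set (ProbabilityMeasure X)) (n : ℕ) (ε : ℝ) : ℕ :=
  sSup {c : ℕ | ∃ E : Finset X, (↑E : Set X) ⊆ {x | empProb f x n ∈ F} ∧
    (∀ x ∈ E, ∀ y ∈ E, x ≠ y → ∃ i < n, ε < dist (f^[i] x) (f^[i] y)) ∧ E.card = c}

/-- `PS-bar(μ,δ,ε) = inf_{F ∋ μ} limsup_n (1/n) ln N(F;δ,n,ε)`. -/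
def PSbar [MetricSpace X] [MeasurableSpace X] [BorelSpace X] (f : X → X)
    (μ : ProbabilityMeasure X) (δ ε : ℝ) : ℝ :=
  sInf ((fun F => limsup (fun n : ℕ => Real.log (NsepD f F δ n ε) / n) atTop) ''
    {F : Set (ProbabilityMeasure X) | F ∈ 𝓝 μ})

/-! ### Convex combinations of probability measures -/

/-- The convex hull `cov{μ_1,…,μ_m}` of finitely many probability measures. -/
def convexCombos [MeasurableSpace X] {m : ℕ} (μ : Fin m → ProbabilityMeasure X) :
    Set (ProbabilityMeasure X) :=
  {ν | ∃ t : Fin m → ℝ≥0∞, (∑ i, t i) = 1 ∧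
    (ν : Measure X) = ∑ i, t i • (μ i : Measure X)}

/-- The convex combination `θ μ + (1-θ) ν` of two probability measures (with `θ`
clamped into `[0,1]`). -/
def mixP [MeasurableSpace X] (μ ν : ProbabilityMeasure X) (θ : ℝ) : ProbabilityMeasure X :=
  ⟨ENNReal.ofReal (min (max θ 0) 1) • (μ : Measure X)
      + ENNReal.ofReal (1 - min (max θ 0) 1) • (ν : Measure X), by
    constructor
    set t := min (max θ 0) 1 with ht
    have h0 : 0 ≤ t := le_min (le_max_right θ 0) zero_le_one
    have h1 : t ≤ 1 := min_le_right _ _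
    rw [Measure.add_apply, Measure.smul_apply, Measure.smul_apply, measure_univ, measure_univ,
      smul_eq_mul, smul_eq_mul, mul_one, mul_one, ← ENNReal.ofReal_add h0 (by linarith)]
    have : t + (1 - t) = 1 := by ring
    rw [this, ENNReal.ofReal_one]⟩

/-- Condition A.3: for invariant `μ, ν` with `α μ ≠ α ν`, the map
`θ ↦ α(θμ + (1-θ)ν)` is not constant on any nondegenerate subinterval of `[0,1]`. -/
def CondA3 [MeasurableSpace X] (f : X → X) (α : ProbabilityMeasure X → ℝ) : Prop :=
  ∀ μ ∈ invSet f, ∀ ν ∈ invSet f, α μ ≠ α ν →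
    ∀ a b : ℝ, 0 ≤ a → a < b → b ≤ 1 →
      ¬ (∀ s ∈ Set.Icc a b, ∀ t ∈ Set.Icc a b, α (mixP μ ν s) = α (mixP μ ν t))

end MMD

end

open MMD MeasureTheory Filter Set Topology
open scoped ENNReal NNReal

noncomputable section

/-!
Fix `μ ∈ K`, a partition `ξ` with `diam ξ < ε` and `s > h_μ(f, ξ)`, so that `H_μ(ξ^m) < m s` for
some `m`. Give an atom `C` of `ξ^m` the Shannon code length `-log μ(C)`, whose mean is `H_μ(ξ^m)`.
Inner regularity and the tube lemma replace the atoms by open sets, still of Bowen diameter `< ε`,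
and a few sets of large code length complete them to a cover of `X`, at the price of a slightly
larger mean. Every point then lies in a set of code length at most `G`, where `G` is continuous
and `∫ G dμ < m s`.

If `μ` is a limit point of the empirical measures of `x`, then infinitely often the Birkhoff average
of `G` along `x` is below some `a < m s`. For such `n`, one of the `m` residue classes of times
modulo `m` codes the first `n` iterates of `x` by a word of total length at most about `n a / m`.
By Kraft's inequality there are at most `exp T` words of total length at most `T`, and the points
coded by a given word lie in one Bowen ball of radius `ε`; so the balls needed for all large `n`
have a convergent weight sum at the exponent `s`, whose tails tend to zero.
-/

universe u

namespace MMD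

section Partitions

variable {X : Type*}

lemma mem_joinParts {P Q : Finset (Set X)} {C : Set X} :
    C ∈ joinParts P Q ↔ ∃ A ∈ P, ∃ B ∈ Q, A ∩ B = C := by
  simp [joinParts, and_assoc, ← exists_and_left]

lemma mem_dynJoin_succ {f : X → X} {P : Finset (Set X)} {n : ℕ} {C : Set X} :
    C ∈ dynJoin f P (n + 1) ↔ ∃ A ∈ P, ∃ B ∈ dynJoin f P n, A ∩ f ⁻¹' B = C := by
  simp [dynJoin, mem_joinParts]

lemma card_joinParts_le (P Q : Finset (Set X)) : (joinParts P Q).card ≤ P.card * Q.card :=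
  Finset.card_image_le.trans_eq (Finset.card_product P Q)

lemma card_dynJoin_le (f : X → X) (P : Finset (Set X)) (n : ℕ) :
    (dynJoin f P n).card ≤ P.card ^ n := by
  induction n with
  | zero => simp [dynJoin]
  | succ n ih =>
    calc (dynJoin f P (n + 1)).card ≤ P.card * (dynJoin f P n).card :=
          (card_joinParts_le _ _).trans (Nat.mul_le_mul_left _ Finset.card_image_le)
      _ ≤ P.card * P.card ^ n := Nat.mul_le_mul_left _ ih
      _ = P.card ^ (n + 1) := (pow_succ' _ _).symm

lemma mem_bowenBall_of_mem_dynJoin [PseudoMetricSpace X] [BoundedSpace X] {f : X → X}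
    {P : Finset (Set X)} {ε : ℝ} (hP : partDiamLt P ε) {n : ℕ} {C : Set X}
    (hC : C ∈ dynJoin f P n) {y z : X} (hy : y ∈ C) (hz : z ∈ C) : z ∈ bowenBall f y n ε := by
  induction n generalizing C y z with
  | zero => simp [bowenBall]
  | succ n ih =>
    obtain ⟨A, hA, B, hB, rfl⟩ := mem_dynJoin_succ.1 hC
    rintro (_ | i) hi
    · exact (Metric.dist_le_diam_of_mem (.all A) hy.1 hz.1).trans_lt (hP A hA)
    · exact ih hB hy.2 hz.2 i (Nat.succ_lt_succ_iff.1 hi)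

variable [MeasurableSpace X] {μ : Measure X} {P : Finset (Set X)}

lemma IsPartition.measurableSet (hP : IsPartition μ P) {A : Set X} (hA : A ∈ P) :
    MeasurableSet A :=
  hP.1 A hA

lemma IsPartition.ae_exists_mem (hP : IsPartition μ P) : ∀ᵐ x ∂μ, ∃ A ∈ P, x ∈ A := by
  refine measure_mono_null (fun x hx => ?_) hP.2.1
  exact ⟨mem_univ x, by simpa using hx⟩

lemma isPartition_of_ae_exists_mem (hmeas : ∀ A ∈ P, MeasurableSet A)
    (hcover : ∀ᵐ x ∂μ, ∃ A ∈ P, x ∈ A)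
    (hdisj : ∀ A ∈ P, ∀ B ∈ P, A ≠ B → μ (A ∩ B) = 0) : IsPartition μ P :=
  ⟨hmeas, measure_mono_null (fun x hx => by simpa using hx) hcover, hdisj⟩

lemma IsPartition.dynJoin_succ {f : X → X} (hf : MeasurePreserving f μ μ) {n : ℕ}
    (hP : IsPartition μ P) (hn : IsPartition μ (dynJoin f P n)) :
    IsPartition μ (dynJoin f P (n + 1)) := by
  refine isPartition_of_ae_exists_mem (fun C hC => ?_) ?_ fun C hC C' hC' hne => ?_
  · obtain ⟨A, hA, B, hB, rfl⟩ := mem_dynJoin_succ.1 hC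
    exact (hP.measurableSet hA).inter (hf.measurable (hn.measurableSet hB))
  · filter_upwards [hP.ae_exists_mem, hf.quasiMeasurePreserving.ae hn.ae_exists_mem]
      with x ⟨A, hA, hxA⟩ ⟨B, hB, hxB⟩
    exact ⟨A ∩ f ⁻¹' B, mem_dynJoin_succ.2 ⟨A, hA, B, hB, rfl⟩, hxA, hxB⟩
  · obtain ⟨A, hA, B, hB, rfl⟩ := mem_dynJoin_succ.1 hC
    obtain ⟨A', hA', B', hB', rfl⟩ := mem_dynJoin_succ.1 hC'
    by_cases hAA' : A = A'
    · have hBB' : B ≠ B' := fun h => hne (by rw [hAA', h])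
      exact measure_mono_null (inter_subset_inter inter_subset_right inter_subset_right)
        (hf.quasiMeasurePreserving.preimage_null (hn.2.2 B hB B' hB' hBB'))
    · exact measure_mono_null (inter_subset_inter inter_subset_left inter_subset_left)
        (hP.2.2 A hA A' hA' hAA')

lemma isPartition_dynJoin {f : X → X} (hf : MeasurePreserving f μ μ) (hP : IsPartition μ P)
    (n : ℕ) : IsPartition μ (dynJoin f P n) := by
  induction n with
  | zero => refine isPartition_of_ae_exists_mem ?_ ?_ ?_ <;> simp [dynJoin]
  | succ n ih => exact hP.dynJoin_succ hf ih

lemma IsPartition.filter_measure_ne_zero (hP : IsPartition μ P) :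
    IsPartition μ {A ∈ P | μ A ≠ 0} := by
  refine isPartition_of_ae_exists_mem
    (fun A hA => hP.measurableSet (Finset.mem_of_mem_filter A hA)) ?_
    fun A hA B hB => hP.2.2 A (Finset.mem_of_mem_filter A hA) B (Finset.mem_of_mem_filter B hB)
  have h_null : ∀ᵐ x ∂μ, ∀ A ∈ P, μ A = 0 → x ∉ A :=
    (Filter.eventually_all_finset P).2 fun A _ =>
      eventually_imp_distrib_left.2 measure_eq_zero_iff_ae_notMem.1
  filter_upwards [hP.ae_exists_mem, h_null] with x ⟨A, hA, hxA⟩ hx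
  exact ⟨A, Finset.mem_filter.2 ⟨hA, fun h0 => hx A hA h0 hxA⟩, hxA⟩

lemma partEnt_filter_measure_ne_zero (μ : Measure X) (P : Finset (Set X)) :
    partEnt μ {A ∈ P | μ A ≠ 0} = partEnt μ P :=
  Finset.sum_filter_of_ne fun A _ hA h0 => hA (by simp [h0])

lemma IsPartition.sum_restrict (hP : IsPartition μ P) : ∑ A ∈ P, μ.restrict A = μ := by
  have h_union : μ.restrict (⋃ A : P, (A : Set X)) = ∑ A : P, μ.restrict (A : Set X) := by
    rw [← Measure.sum_fintype]
    exact Measure.restrict_iUnion_ae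
      (fun A B hAB => hP.2.2 A A.2 B B.2 (Subtype.coe_ne_coe.2 hAB))
      fun A => (hP.measurableSet A.2).nullMeasurableSet
  rw [← Finset.sum_coe_sort, ← h_union]
  exact Measure.restrict_eq_self_of_ae_mem (by simpa using hP.ae_exists_mem)

lemma IsPartition.integral_eq_sum (hP : IsPartition μ P) {G : X → ℝ} (hG : Integrable G μ) :
    ∫ x, G x ∂μ = ∑ A ∈ P, ∫ x in A, G x ∂μ := by
  conv_lhs => rw [← hP.sum_restrict]
  exact integral_finsetSum_measure fun A _ => hG.restrict

variable [IsProbabilityMeasure μ]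

lemma IsPartition.sum_measureReal (hP : IsPartition μ P) : ∑ A ∈ P, μ.real A = 1 := by
  simpa using (hP.integral_eq_sum (integrable_const (1 : ℝ))).symm

lemma IsPartition.nonempty (hP : IsPartition μ P) : P.Nonempty :=
  Finset.nonempty_of_sum_ne_zero (hP.sum_measureReal.trans_ne one_ne_zero)

lemma partEnt_nonneg (μ : Measure X) [IsProbabilityMeasure μ] (P : Finset (Set X)) :
    0 ≤ partEnt μ P :=
  Finset.sum_nonneg fun _ _ => Real.negMulLog_nonneg measureReal_nonneg measureReal_le_one

lemma IsPartition.partEnt_le_log_card (hP : IsPartition μ P) :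
    partEnt μ P ≤ Real.log P.card := by
  have hcard : (0 : ℝ) < P.card := mod_cast hP.nonempty.card_pos
  have h_jensen := Real.concaveOn_negMulLog.le_map_sum (t := P) (w := fun _ => (P.card : ℝ)⁻¹)
    (p := μ.real) (fun _ _ => by positivity) (by simp [hcard.ne']) (fun _ _ => by simp)
  simp only [smul_eq_mul, ← Finset.mul_sum, hP.sum_measureReal, mul_one, Real.negMulLog,
    Real.log_inv, neg_mul_neg] at h_jensen
  simpa [partEnt, Real.negMulLog, Measure.real] using
    le_of_mul_le_mul_left h_jensen (inv_pos.2 hcard)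

lemma IsPartition.partEnt_dynJoin_le {f : X → X} (hf : MeasurePreserving f μ μ)
    (hP : IsPartition μ P) (n : ℕ) : partEnt μ (dynJoin f P n) ≤ n * Real.log P.card := by
  have hPn := isPartition_dynJoin hf hP n
  calc partEnt μ (dynJoin f P n) ≤ Real.log (dynJoin f P n).card := hPn.partEnt_le_log_card
    _ ≤ Real.log ((P.card : ℝ) ^ n) :=
        Real.log_le_log (mod_cast hPn.nonempty.card_pos) (mod_cast card_dynJoin_le f P n)
    _ = n * Real.log P.card := Real.log_pow _ _

lemma IsPartition.exists_partEnt_dynJoin_lt {f : X → X} (hf : MeasurePreserving f μ μ)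
    (hP : IsPartition μ P) {s : ℝ} (hs : dynEnt μ f P < s) :
    ∃ m : ℕ, 0 < m ∧ partEnt μ (dynJoin f P m) < m * s := by
  have h_bdd : IsBoundedUnder (· ≤ ·) atTop fun n : ℕ => partEnt μ (dynJoin f P n) / n :=
    isBoundedUnder_of_eventually_le <| (eventually_gt_atTop 0).mono fun n hn =>
      (div_le_iff₀' (mod_cast hn)).2 (hP.partEnt_dynJoin_le hf n)
  obtain ⟨m, hm, hm0⟩ :=
    ((eventually_lt_of_limsup_lt hs h_bdd).and (eventually_gt_atTop 0)).exists
  exact ⟨m, hm0, (div_lt_iff₀' (mod_cast hm0)).1 hm⟩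

end Partitions

section SmallPartitions

variable {X : Type*} [MeasurableSpace X]

lemma isPartition_image_fibers {Y : Type*} (μ : Measure X) (φ : SimpleFunc X Y) :
    letI := Classical.decEq (Set X)
    IsPartition μ (φ.range.image fun y => φ ⁻¹' {y}) := by
  classical
  refine isPartition_of_ae_exists_mem ?_ (Eventually.of_forall fun x => ?_) ?_
  · simp only [Finset.forall_mem_image]
    exact fun y _ => φ.measurableSet_fiber y
  · exact ⟨_, Finset.mem_image_of_mem _ (φ.mem_range_self x), rfl⟩
  · simp only [Finset.forall_mem_image]
    intro y _ z _ hne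
    have hyz : y ≠ z := fun h => hne (by rw [h])
    rw [((disjoint_singleton.2 hyz).preimage φ).inter_eq, measure_empty]

lemma exists_simpleFunc_dist_lt [PseudoMetricSpace X] [CompactSpace X] [Nonempty X]
    [OpensMeasurableSpace X] {r : ℝ} (hr : 0 < r) :
    ∃ φ : SimpleFunc X X, ∀ x, dist (φ x) x < r := by
  let e := TopologicalSpace.denseSeq X
  obtain ⟨t, ht⟩ := isCompact_univ.elim_finite_subcover (fun k => Metric.ball (e k) r)
    (fun _ => Metric.isOpen_ball)
    (fun x _ => mem_iUnion.2 ((TopologicalSpace.denseRange_denseSeq X).exists_dist_lt x hr))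
  obtain ⟨N, hN⟩ := t.exists_nat_subset_range
  refine ⟨SimpleFunc.nearestPt e N, fun x => ?_⟩
  obtain ⟨k, hk, hxk⟩ := mem_iUnion₂.1 (ht (mem_univ x))
  rw [← edist_lt_ofReal]
  exact (SimpleFunc.edist_nearestPt_le e x (Finset.mem_range.1 (hN hk)).le).trans_lt
    (edist_lt_ofReal.2 (Metric.mem_ball'.1 hxk))

lemma exists_isPartition_partDiamLt [PseudoMetricSpace X] [CompactSpace X] [Nonempty X]
    [OpensMeasurableSpace X] (μ : Measure X) {ε : ℝ} (hε : 0 < ε) :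
    ∃ P : Finset (Set X), IsPartition μ P ∧ partDiamLt P ε := by
  classical
  obtain ⟨φ, hφ⟩ := exists_simpleFunc_dist_lt (X := X) (r := ε / 3) (by positivity)
  refine ⟨_, isPartition_image_fibers μ φ, ?_⟩
  simp only [partDiamLt, Finset.forall_mem_image]
  intro y _
  have h_sub : φ ⁻¹' {y} ⊆ Metric.ball y (ε / 3) := by
    rintro x rfl
    exact Metric.mem_ball'.2 (hφ x)
  calc Metric.diam (φ ⁻¹' {y}) ≤ Metric.diam (Metric.ball y (ε / 3)) :=
        Metric.diam_mono h_sub Metric.isBounded_ball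
    _ ≤ 2 * (ε / 3) := Metric.diam_ball (by positivity)
    _ < ε := by linarith

end SmallPartitions

section KraftCovers

variable {X κ : Type*} [Fintype κ] {D : κ → Set X} {ℓ : κ → ℝ} {G : X → ℝ}

/-- A finite cover of `X` whose members carry code lengths, measured with base `e`, satisfying
Kraft's inequality, such that every point `x` lies in a member of length at most `G x`. The cost of
coding an orbit is then bounded by a Birkhoff sum of `G`, which weak* limits of empirical measures
control as soon as `G` is continuous. -/
structure IsKraftCover (D : κ → Set X) (ℓ : κ → ℝ) (G : X → ℝ) : Prop where
  kraft : ∑ i, Real.exp (-ℓ i) ≤ 1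
  exists_mem : ∀ x, ∃ i, x ∈ D i ∧ ℓ i ≤ G x

lemma length_nonneg_of_sum_exp_le_one {ι : Type*} {s : Finset ι} {ℓ : ι → ℝ}
    (hℓ : ∑ i ∈ s, Real.exp (-ℓ i) ≤ 1) {i : ι} (hi : i ∈ s) : 0 ≤ ℓ i := by
  have h_exp : Real.exp (-ℓ i) ≤ 1 :=
    (Finset.single_le_sum (f := fun i => Real.exp (-ℓ i)) (fun _ _ => Real.exp_nonneg _) hi).trans
      hℓ
  simpa using h_exp

lemma IsKraftCover.cost_nonneg (h : IsKraftCover D ℓ G) (x : X) : 0 ≤ G x :=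
  let ⟨i, _, hi⟩ := h.exists_mem x
  (length_nonneg_of_sum_exp_le_one h.kraft (Finset.mem_univ i)).trans hi

lemma card_words_le_exp (hℓ : ∑ i, Real.exp (-ℓ i) ≤ 1) (L : ℕ) (T : ℝ) :
    (Finset.card {w : Fin L → κ | ∑ j, ℓ (w j) ≤ T} : ℝ) ≤ Real.exp T := by
  suffices h : (Finset.card {w : Fin L → κ | ∑ j, ℓ (w j) ≤ T} : ℝ) * Real.exp (-T) ≤ 1 by
    rwa [Real.exp_neg, ← div_eq_mul_inv, div_le_one (Real.exp_pos T)] at h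
  calc (Finset.card {w : Fin L → κ | ∑ j, ℓ (w j) ≤ T} : ℝ) * Real.exp (-T)
      = ∑ w : Fin L → κ with ∑ j, ℓ (w j) ≤ T, Real.exp (-T) := by
        rw [Finset.sum_const, nsmul_eq_mul]
    _ ≤ ∑ w : Fin L → κ with ∑ j, ℓ (w j) ≤ T, Real.exp (-∑ j, ℓ (w j)) :=
        Finset.sum_le_sum fun w hw =>
          Real.exp_le_exp.2 (neg_le_neg (Finset.mem_filter_univ w |>.1 hw))
    _ ≤ ∑ w : Fin L → κ, Real.exp (-∑ j, ℓ (w j)) :=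
        Finset.sum_le_univ_sum_of_nonneg fun _ => Real.exp_nonneg _
    _ = (∑ i, Real.exp (-ℓ i)) ^ L := by
        simp only [← Finset.sum_neg_distrib, Real.exp_sum, Fintype.sum_pow]
    _ ≤ 1 := pow_le_one₀ (by positivity) hℓ

lemma exists_length_bound_kraft {ι : Type*} {s : Finset ι} {ℓ : ι → ℝ}
    (hℓ : ∑ i ∈ s, Real.exp (-ℓ i) < 1) (k : ℕ) :
    ∃ M, 0 ≤ M ∧ (∀ i ∈ s, ℓ i ≤ M) ∧ ∑ i ∈ s, Real.exp (-ℓ i) + k * Real.exp (-M) ≤ 1 := by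
  have h_lim : Tendsto (fun M : ℝ => ∑ i ∈ s, Real.exp (-ℓ i) + k * Real.exp (-M)) atTop
      (𝓝 (∑ i ∈ s, Real.exp (-ℓ i))) := by
    simpa using (Real.tendsto_exp_neg_atTop_nhds_zero.const_mul (k : ℝ)).const_add
      (∑ i ∈ s, Real.exp (-ℓ i))
  have h_ub : ∀ᶠ M in atTop, ∀ i ∈ s, ℓ i ≤ M :=
    (eventually_all_finset s).2 fun i _ => eventually_ge_atTop (ℓ i)
  exact ((eventually_ge_atTop 0).and (h_ub.and (h_lim.eventually_le_const hℓ))).exists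

end KraftCovers

section OpenRefinement

variable {X : Type*} [TopologicalSpace X]

lemma exists_isOpen_prod_self_subset {K : Set X} (hK : IsCompact K) {O : Set (X × X)}
    (hO : IsOpen O) (hKO : K ×ˢ K ⊆ O) : ∃ U, IsOpen U ∧ K ⊆ U ∧ U ×ˢ U ⊆ O := by
  obtain ⟨U, V, hU, hV, hKU, hKV, hUV⟩ := generalized_tube_lemma hK hK hO hKO
  exact ⟨U ∩ V, hU.inter hV, subset_inter hKU hKV,
    (prod_mono inter_subset_left inter_subset_right).trans hUV⟩

lemma exists_finset_cover_prod_self_subset [CompactSpace X] {O : Set (X × X)} (hO : IsOpen O)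
    (hdiag : diagonal X ⊆ O) :
    ∃ (t : Finset X) (W : X → Set X), (∀ x, ∃ y ∈ t, x ∈ W y) ∧ ∀ y, W y ×ˢ W y ⊆ O := by
  have h_nhds (y : X) : ∃ U, IsOpen U ∧ {y} ⊆ U ∧ U ×ˢ U ⊆ O :=
    exists_isOpen_prod_self_subset isCompact_singleton hO
      (by simpa using hdiag (mem_diagonal y))
  choose W hW_open hyW hWO using h_nhds
  obtain ⟨t, ht⟩ := CompactSpace.elim_nhds_subcover W
    fun y => (hW_open y).mem_nhds (singleton_subset_iff.1 (hyW y))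
  exact ⟨t, W, fun x => by simpa using ht.ge (mem_univ x), hWO⟩

variable [RegularSpace X] [LocallyCompactSpace X]

lemma exists_continuousMap_Icc_of_isCompact {K U : Set X} (hK : IsCompact K) (hU : IsOpen U)
    (hKU : K ⊆ U) {ℓ M : ℝ} (hℓM : ℓ ≤ M) :
    ∃ g : C(X, ℝ), (∀ x, g x ∈ Icc ℓ M) ∧ (∀ x ∈ K, g x = ℓ) ∧ ∀ x ∉ U, g x = M := by
  obtain ⟨φ, hφK, hφU, hφ⟩ := exists_continuous_zero_one_of_isCompact hK hU.isClosed_compl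
    (disjoint_compl_right_iff_subset.2 hKU)
  refine ⟨⟨fun x => ℓ + (M - ℓ) * φ x, by fun_prop⟩, fun x => ⟨?_, ?_⟩, fun x hx => ?_,
    fun x hx => ?_⟩
  · exact le_add_of_nonneg_right (mul_nonneg (sub_nonneg.2 hℓM) (hφ x).1)
  · exact le_sub_iff_add_le'.1 (mul_le_of_le_one_right (sub_nonneg.2 hℓM) (hφ x).2)
  · simp [hφK hx]
  · simp [hφU hx]

lemma exists_continuousMap_le_on_isCompact {ι : Type*} (s : Finset ι) {K U : ι → Set X}
    {ℓ : ι → ℝ} {M : ℝ} (hK : ∀ i ∈ s, IsCompact (K i)) (hU : ∀ i ∈ s, IsOpen (U i))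
    (hKU : ∀ i ∈ s, K i ⊆ U i) (hℓM : ∀ i ∈ s, ℓ i ≤ M) :
    ∃ G : C(X, ℝ), (∀ x, G x ≤ M) ∧ (∀ i ∈ s, ∀ x ∈ K i, G x ≤ ℓ i) ∧
      ∀ x, G x = M ∨ ∃ i ∈ s, x ∈ U i ∧ ℓ i ≤ G x := by
  classical
  induction s using Finset.induction_on with
  | empty => exact ⟨.const X M, by simp⟩
  | insert i s _ ih =>
    simp only [Finset.forall_mem_insert] at hK hU hKU hℓM
    obtain ⟨G, hGM, hGK, hG⟩ := ih hK.2 hU.2 hKU.2 hℓM.2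
    obtain ⟨g, hg, hgK, hgU⟩ :=
      exists_continuousMap_Icc_of_isCompact hK.1 hU.1 hKU.1 hℓM.1
    refine ⟨g ⊓ G, fun x => inf_le_of_right_le (hGM x), ?_, fun x => ?_⟩
    · rw [Finset.forall_mem_insert]
      exact ⟨fun x hx => inf_le_of_left_le (hgK x hx).le,
        fun j hj x hx => inf_le_of_right_le (hGK j hj x hx)⟩
    · rcases le_total (g x) (G x) with hle | hle
      · rw [ContinuousMap.inf_apply, inf_eq_left.2 hle]
        by_cases hxU : x ∈ U i
        · exact .inr ⟨i, Finset.mem_insert_self i s, hxU, (hg x).1⟩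
        · exact .inl (hgU x hxU)
      · rw [ContinuousMap.inf_apply, inf_eq_right.2 hle]
        exact (hG x).imp_right fun ⟨j, hj, hxj⟩ => ⟨j, Finset.mem_insert_of_mem hj, hxj⟩

end OpenRefinement

section EntropyCost

variable {X : Type*} [MeasurableSpace X] {μ : Measure X} {P : Finset (Set X)}

lemma setIntegral_le_of_le_on_subset [IsFiniteMeasure μ] {A K : Set X} (hA : MeasurableSet A)
    (hK : MeasurableSet K) (hKA : K ⊆ A) {G : X → ℝ} (hG : Integrable G μ) {ℓ M δ : ℝ}
    (hℓ : 0 ≤ ℓ) (hM : 0 ≤ M) (hGM : ∀ x, G x ≤ M) (hGK : ∀ x ∈ K, G x ≤ ℓ)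
    (hδ : μ.real (A \ K) ≤ δ) : ∫ x in A, G x ∂μ ≤ ℓ * μ.real A + M * δ := by
  have h_on_K : ∫ x in K, G x ∂μ ≤ ℓ * μ.real K := by
    simpa [mul_comm] using
      setIntegral_mono_on hG.integrableOn integrableOn_const hK hGK
  have h_off_K : ∫ x in A \ K, G x ∂μ ≤ M * μ.real (A \ K) := by
    simpa [mul_comm] using
      setIntegral_mono_on hG.integrableOn integrableOn_const (hA.diff hK) fun x _ => hGM x
  calc ∫ x in A, G x ∂μ = ∫ x in K, G x ∂μ + ∫ x in A \ K, G x ∂μ := by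
        rw [← integral_inter_add_sdiff hK hG.integrableOn, inter_eq_right.2 hKA]
    _ ≤ ℓ * μ.real K + M * μ.real (A \ K) := add_le_add h_on_K h_off_K
    _ ≤ ℓ * μ.real A + M * δ := by gcongr; exact measure_ne_top μ A

lemma IsPartition.integral_le_of_le_on_subset [IsFiniteMeasure μ] (hP : IsPartition μ P)
    {K : Set X → Set X} (hK : ∀ A ∈ P, MeasurableSet (K A)) (hKA : ∀ A ∈ P, K A ⊆ A) {G : X → ℝ}
    (hG : Integrable G μ) {ℓ : Set X → ℝ} {M δ : ℝ} (hℓ : ∀ A ∈ P, 0 ≤ ℓ A) (hM : 0 ≤ M)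
    (hGM : ∀ x, G x ≤ M) (hGK : ∀ A ∈ P, ∀ x ∈ K A, G x ≤ ℓ A)
    (hδ : ∀ A ∈ P, μ.real (A \ K A) ≤ δ) :
    ∫ x, G x ∂μ ≤ ∑ A ∈ P, ℓ A * μ.real A + P.card * (M * δ) := by
  calc ∫ x, G x ∂μ = ∑ A ∈ P, ∫ x in A, G x ∂μ := hP.integral_eq_sum hG
    _ ≤ ∑ A ∈ P, (ℓ A * μ.real A + M * δ) := Finset.sum_le_sum fun A hA =>
        setIntegral_le_of_le_on_subset (hP.measurableSet hA) (hK A hA) (hKA A hA) hG (hℓ A hA)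
          hM hGM (hGK A hA) (hδ A hA)
    _ = ∑ A ∈ P, ℓ A * μ.real A + P.card * (M * δ) := by
        rw [Finset.sum_add_distrib, Finset.sum_const, nsmul_eq_mul]

variable [IsProbabilityMeasure μ]

lemma IsPartition.sum_exp_log_sub (hP : IsPartition μ P) (hμ : ∀ A ∈ P, μ A ≠ 0) (η : ℝ) :
    ∑ A ∈ P, Real.exp (-(η - Real.log (μ.real A))) = Real.exp (-η) := by
  calc ∑ A ∈ P, Real.exp (-(η - Real.log (μ.real A)))
      = ∑ A ∈ P, Real.exp (-η) * μ.real A := Finset.sum_congr rfl fun A hA => by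
        have hpos : 0 < μ.real A := ENNReal.toReal_pos (hμ A hA) (measure_ne_top μ A)
        rw [neg_sub, sub_eq_neg_add, Real.exp_add, Real.exp_log hpos]
    _ = Real.exp (-η) := by rw [← Finset.mul_sum, hP.sum_measureReal, mul_one]

lemma IsPartition.sum_sub_log_mul (hP : IsPartition μ P) (η : ℝ) :
    ∑ A ∈ P, (η - Real.log (μ.real A)) * μ.real A = η + partEnt μ P := by
  calc ∑ A ∈ P, (η - Real.log (μ.real A)) * μ.real A
      = ∑ A ∈ P, (η * μ.real A + Real.negMulLog (μ.real A)) :=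
        Finset.sum_congr rfl fun A _ => by rw [Real.negMulLog]; ring
    _ = η + partEnt μ P := by
        rw [Finset.sum_add_distrib, ← Finset.mul_sum, hP.sum_measureReal, mul_one]
        rfl

end EntropyCost

section ContinuousCost

variable {X : Type u} [TopologicalSpace X] [MeasurableSpace X] {μ : Measure X}
  {O : Set (X × X)} {P : Finset (Set X)}

lemma exists_isCompact_isOpen_prod_self_subset [T2Space X] [OpensMeasurableSpace X]
    [IsFiniteMeasure μ] [μ.InnerRegularCompactLTTop] (hO : IsOpen O) {A : Set X}
    (hA : MeasurableSet A) (hAO : A ×ˢ A ⊆ O) {δ : ℝ} (hδ : 0 < δ) :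
    ∃ K U, IsCompact K ∧ K ⊆ A ∧ μ.real (A \ K) ≤ δ ∧ IsOpen U ∧ K ⊆ U ∧ U ×ˢ U ⊆ O := by
  obtain ⟨K, hKA, hK, hμK⟩ := hA.exists_isCompact_sdiff_lt (measure_ne_top μ A)
    (ENNReal.ofReal_pos.2 hδ).ne'
  obtain ⟨U, hU, hKU, hUO⟩ := exists_isOpen_prod_self_subset hK hO ((prod_mono hKA hKA).trans hAO)
  exact ⟨K, U, hK, hKA, ENNReal.toReal_le_of_le_ofReal hδ.le hμK.le, hU, hKU, hUO⟩

variable [CompactSpace X] [T2Space X] [OpensMeasurableSpace X]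
  [μ.InnerRegularCompactLTTop]

lemma IsPartition.exists_isKraftCover_of_length [IsFiniteMeasure μ] (hP : IsPartition μ P)
    (hO : IsOpen O) (hdiag : diagonal X ⊆ O) (hPO : ∀ A ∈ P, A ×ˢ A ⊆ O) {ℓ : Set X → ℝ}
    {a : ℝ} (hℓ : ∑ A ∈ P, Real.exp (-ℓ A) < 1) (ha : ∑ A ∈ P, ℓ A * μ.real A < a) :
    ∃ (κ : Type u) (_ : Fintype κ) (D : κ → Set X) (ℓ' : κ → ℝ) (G : C(X, ℝ)),
      IsKraftCover D ℓ' G ∧ (∀ i, D i ×ˢ D i ⊆ O) ∧ ∫ x, G x ∂μ < a := by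
  obtain ⟨t, W, hW, hWO⟩ := exists_finset_cover_prod_self_subset hO hdiag
  obtain ⟨M, hM, hℓM, hkraft⟩ := exists_length_bound_kraft hℓ t.card
  obtain ⟨δ, hδ, hδa⟩ := exists_pos_mul_lt (sub_pos.2 ha) (P.card * M)
  choose! K U hK hKA hμK hU hKU hUO using fun A hA =>
    exists_isCompact_isOpen_prod_self_subset (μ := μ) hO (hP.measurableSet hA) (hPO A hA) hδ
  obtain ⟨G, hGM, hGK, hG⟩ := exists_continuousMap_le_on_isCompact P hK hU hKU hℓM
  refine ⟨P ⊕ t, inferInstance, Sum.elim (fun A => U A) (fun y => W y),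
    Sum.elim (fun A => ℓ A) (fun _ => M), G, ⟨?_, fun x => ?_⟩, ?_, ?_⟩
  · rw [← Finset.sum_coe_sort] at hkraft
    simpa using hkraft
  · rcases hG x with hGx | ⟨A, hA, hxA, hGx⟩
    · obtain ⟨y, hy, hxy⟩ := hW x
      exact ⟨.inr ⟨y, hy⟩, hxy, hGx.ge⟩
    · exact ⟨.inl ⟨A, hA⟩, hxA, hGx⟩
  · rintro (A | y)
    exacts [hUO A A.2, hWO y]
  · have h_int := hP.integral_le_of_le_on_subset (fun A hA => (hK A hA).measurableSet) hKA
      ((BoundedContinuousFunction.mkOfCompact G).integrable μ)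
      (fun A hA => length_nonneg_of_sum_exp_le_one hℓ.le hA) hM hGM hGK hμK
    calc ∫ x, G x ∂μ ≤ ∑ A ∈ P, ℓ A * μ.real A + P.card * (M * δ) := h_int
      _ < a := by linarith [mul_assoc (P.card : ℝ) M δ]

lemma IsPartition.exists_isKraftCover_integral_lt [IsProbabilityMeasure μ] (hP : IsPartition μ P)
    (hO : IsOpen O) (hdiag : diagonal X ⊆ O) (hPO : ∀ A ∈ P, A ×ˢ A ⊆ O) {a : ℝ}
    (ha : partEnt μ P < a) :
    ∃ (κ : Type u) (_ : Fintype κ) (D : κ → Set X) (ℓ : κ → ℝ) (G : C(X, ℝ)),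
      IsKraftCover D ℓ G ∧ (∀ i, D i ×ˢ D i ⊆ O) ∧ ∫ x, G x ∂μ < a := by
  rw [← partEnt_filter_measure_ne_zero] at ha
  obtain ⟨η, hη, hηa⟩ := exists_between (sub_pos.2 ha)
  have hP' := hP.filter_measure_ne_zero
  refine hP'.exists_isKraftCover_of_length hO hdiag
    (fun A hA => hPO A (Finset.mem_of_mem_filter A hA))
    (ℓ := fun A => η - Real.log (μ.real A)) ?_ ?_
  · rw [hP'.sum_exp_log_sub (fun A hA => (Finset.mem_filter.1 hA).2)]
    simpa using hη
  · rw [hP'.sum_sub_log_mul]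
    linarith

end ContinuousCost

section Blocks

lemma sum_range_sum_range_add_mul {M : Type*} [AddCommMonoid M] (g : ℕ → M) (m L : ℕ) :
    ∑ t ∈ Finset.range m, ∑ i ∈ Finset.range L, g (t + m * i) =
      ∑ j ∈ Finset.range (m * L), g j := by
  induction L with
  | zero => simp
  | succ L ih =>
    rw [Nat.mul_succ, Finset.sum_range_add, ← ih]
    simp only [Finset.sum_range_succ, Finset.sum_add_distrib, Nat.add_comm (m * L)]

lemma exists_shift_mul_sum_le {g : ℕ → ℝ} (hg : ∀ j, 0 ≤ g j) {m : ℕ} (hm : 0 < m) (n : ℕ) :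
    ∃ t < m, m * ∑ i ∈ Finset.range (n / m), g (t + m * i) ≤ ∑ j ∈ Finset.range n, g j := by
  have h_total : ∑ t ∈ Finset.range m, ∑ i ∈ Finset.range (n / m), g (t + m * i)
      ≤ ∑ _t ∈ Finset.range m, (∑ j ∈ Finset.range n, g j) / m := by
    rw [sum_range_sum_range_add_mul, Finset.sum_const, Finset.card_range, nsmul_eq_mul,
      mul_div_cancel₀ _ (by positivity)]
    exact Finset.sum_le_sum_of_subset_of_nonneg (Finset.range_mono (Nat.mul_div_le n m))
      fun j _ _ => hg j
  obtain ⟨t, ht, hle⟩ := Finset.exists_le_of_sum_le (Finset.nonempty_range_iff.2 hm.ne') h_total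
  exact ⟨t, Finset.mem_range.1 ht, (le_div_iff₀' (mod_cast hm)).1 hle⟩

variable {X κ : Type*} {f : X → X} {D : κ → Set X} {m : ℕ}

/-- The points starting in `D i₀` whose orbit visits `D (w 0), D (w 1), …` at the times
`t, t + m, …`. -/
def cylinder (f : X → X) (D : κ → Set X) (m t : ℕ) (i₀ : κ) {L : ℕ} (w : Fin L → κ) : Set X :=
  {x | x ∈ D i₀ ∧ ∀ j, f^[t + m * j] x ∈ D (w j)}

lemma mem_bowenBall_of_blocks [PseudoMetricSpace X] {ε : ℝ} {t L : ℕ} {y z : X}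
    (hstart : z ∈ bowenBall f y t ε)
    (hblock : ∀ i < L, f^[t + m * i] z ∈ bowenBall f (f^[t + m * i] y) m ε) :
    z ∈ bowenBall f y (t + m * L) ε := by
  intro k hk
  rcases lt_or_ge k t with hkt | htk
  · exact hstart k hkt
  · obtain ⟨q, rfl⟩ := Nat.exists_eq_add_of_le htk
    have hq : q < m * L := Nat.add_lt_add_iff_left.1 hk
    have h_iter : t + q = q % m + (t + m * (q / m)) := by have := Nat.mod_add_div q m; omega
    rw [h_iter, Function.iterate_add_apply _ (q % m), Function.iterate_add_apply _ (q % m)]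
    exact hblock (q / m) (Nat.div_lt_of_lt_mul hq) _
      (Nat.mod_lt _ (Nat.pos_of_mul_pos_right (Nat.zero_lt_of_lt hq)))

lemma mem_bowenBall_of_mem_cylinder [PseudoMetricSpace X] {ε : ℝ}
    (hD : ∀ i, ∀ y ∈ D i, ∀ z ∈ D i, z ∈ bowenBall f y m ε) {t L : ℕ} (ht : t ≤ m) {i₀ : κ}
    {w : Fin L → κ} {y z : X} (hy : y ∈ cylinder f D m t i₀ w) (hz : z ∈ cylinder f D m t i₀ w) :
    z ∈ bowenBall f y (m * L) ε := by
  have h := mem_bowenBall_of_blocks (fun i hi => hD i₀ y hy.1 z hz.1 i (hi.trans_le ht))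
    fun i hi => hD _ _ (hy.2 ⟨i, hi⟩) _ (hz.2 ⟨i, hi⟩)
  exact fun k hk => h k (hk.trans_le (Nat.le_add_left _ _))

lemma IsKraftCover.exists_mem_cylinder [Fintype κ] {ℓ : κ → ℝ} {G : X → ℝ}
    (h : IsKraftCover D ℓ G) (hm : 0 < m) {a : ℝ} (ha : 0 ≤ a) {n : ℕ} {x : X}
    (hx : birkhoffSum f G n x ≤ n * a) :
    ∃ t < m, ∃ (i₀ : κ) (w : Fin (n / m) → κ),
      x ∈ cylinder f D m t i₀ w ∧ ∑ j, ℓ (w j) ≤ (n / m + 1 : ℕ) * a := by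
  obtain ⟨t, ht, hsum⟩ :=
    exists_shift_mul_sum_le (g := fun j => G (f^[j] x)) (fun j => h.cost_nonneg _) hm n
  choose i hiD hiG using h.exists_mem
  refine ⟨t, ht, i x, fun j => i (f^[t + m * j] x), ⟨hiD x, fun j => hiD _⟩, ?_⟩
  have hn : (n : ℝ) ≤ m * (n / m + 1 : ℕ) := mod_cast (Nat.lt_mul_div_succ n hm).le
  have h_cost : m * ∑ j ∈ Finset.range (n / m), G (f^[t + m * j] x)
      ≤ m * ((n / m + 1 : ℕ) * a) :=
    calc _ ≤ n * a := hsum.trans hx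
      _ ≤ m * (n / m + 1 : ℕ) * a := by gcongr
      _ = _ := mul_assoc _ _ _
  calc ∑ j : Fin (n / m), ℓ (i (f^[t + m * j] x))
      ≤ ∑ j : Fin (n / m), G (f^[t + m * j] x) := Finset.sum_le_sum fun j _ => hiG _
    _ = ∑ j ∈ Finset.range (n / m), G (f^[t + m * j] x) :=
        Fin.sum_univ_eq_sum_range (fun j => G (f^[t + m * j] x)) _
    _ ≤ (n / m + 1 : ℕ) * a := le_of_mul_le_mul_left h_cost (mod_cast hm)

end Blocks

section BowenCovers

variable {X : Type*} [PseudoMetricSpace X] {f : X → X} {ε : ℝ}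

lemma exists_finset_bowenBall_cover {ι : Type*} (s : Finset ι) {C : ι → Set X} {n : ℕ}
    (hC : ∀ i ∈ s, ∀ y ∈ C i, ∀ z ∈ C i, z ∈ bowenBall f y n ε) :
    ∃ E : Finset X, E.card ≤ s.card ∧ ∀ i ∈ s, ∀ x ∈ C i, ∃ e ∈ E, x ∈ bowenBall f e n ε := by
  classical
  rcases isEmpty_or_nonempty X with _ | _
  · exact ⟨∅, by simp⟩
  choose! c hc using fun i (hi : (C i).Nonempty) => hi
  exact ⟨s.image c, Finset.card_image_le, fun i hi x hx =>
    ⟨c i, Finset.mem_image_of_mem c hi, hC i hi _ (hc i ⟨x, hx⟩) x hx⟩⟩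

lemma IsKraftCover.exists_finset_bowenBall_cover {κ : Type*} [Fintype κ] {D : κ → Set X}
    {ℓ : κ → ℝ} {G : X → ℝ} (h : IsKraftCover D ℓ G) {m : ℕ} (hm : 0 < m)
    (hD : ∀ i, ∀ y ∈ D i, ∀ z ∈ D i, z ∈ bowenBall f y m ε) {a : ℝ} (ha : 0 ≤ a) (L : ℕ) :
    ∃ E : Finset X, (E.card : ℝ) ≤ m * Fintype.card κ * Real.exp ((L + 1 : ℕ) * a) ∧
      ∀ n x, n / m = L → birkhoffSum f G n x ≤ n * a → ∃ e ∈ E, x ∈ bowenBall f e (m * L) ε := by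
  let words : Finset (Fin L → κ) := {w | ∑ j, ℓ (w j) ≤ (L + 1 : ℕ) * a}
  obtain ⟨E, hE_card, hE⟩ := MMD.exists_finset_bowenBall_cover (f := f) (ε := ε) (n := m * L)
    (Finset.univ ×ˢ Finset.univ ×ˢ words : Finset (Fin m × κ × (Fin L → κ)))
    (C := fun p => cylinder f D m p.1 p.2.1 p.2.2)
    fun p _ _ hy _ hz => mem_bowenBall_of_mem_cylinder hD p.1.2.le hy hz
  refine ⟨E, ?_, ?_⟩
  · calc (E.card : ℝ) ≤ m * Fintype.card κ * words.card := by
          simpa [mul_assoc] using (Nat.cast_le (α := ℝ)).2 hE_card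
      _ ≤ m * Fintype.card κ * Real.exp ((L + 1 : ℕ) * a) := by
          gcongr
          exact card_words_le_exp h.kraft L _
  · rintro n x rfl hx
    obtain ⟨t, ht, i₀, w, hxw, hw⟩ := h.exists_mem_cylinder hm ha hx
    exact hE (⟨t, ht⟩, i₀, w) (by simpa [words] using hw) x hxw

lemma coverSum_finset_prod_singleton {X : Type*} (s : ℝ) (E : Finset X) (n : ℕ) :
    coverSum s ((E : Set X) ×ˢ {n}) = ENNReal.ofReal (E.card * Real.exp (-s * n)) := by
  have h_coe : ((E : Set X) ×ˢ {n} : Set (X × ℕ)) = ((E ×ˢ {n} : Finset (X × ℕ)) : Set _) := by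
    rw [Finset.coe_product, Finset.coe_singleton]
  rw [coverSum, h_coe, Finset.tsum_subtype' (E ×ˢ {n})
    fun p : X × ℕ => ENNReal.ofReal (Real.exp (-s * p.2)), Finset.sum_product]
  simp [ENNReal.ofReal_mul]

lemma mB_le_tsum {Z : Set X} {s : ℝ} {N : ℕ} {E : ℕ → Finset X} {n : ℕ → ℕ} (hn : ∀ k, N ≤ n k)
    (hZ : ∀ x ∈ Z, ∃ k, ∃ e ∈ E k, x ∈ bowenBall f e (n k) ε) :
    mB f Z s N ε ≤ ∑' k, ENNReal.ofReal ((E k).card * Real.exp (-s * n k)) := by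
  let C : Set (X × ℕ) := ⋃ k, (E k : Set X) ×ˢ {n k}
  have hC_countable : C.Countable :=
    countable_iUnion fun k => (E k).countable_toSet.prod (countable_singleton _)
  have hC_length : ∀ p ∈ C, N ≤ p.2 := by
    intro p hp
    obtain ⟨k, _, hk⟩ := mem_iUnion.1 hp
    exact hk ▸ hn k
  have hC_cover : Z ⊆ ⋃ p ∈ C, bowenBall f p.1 p.2 ε := by
    intro x hx
    obtain ⟨k, e, he, hxe⟩ := hZ x hx
    exact mem_iUnion₂.2 ⟨(e, n k), mem_iUnion.2 ⟨k, he, rfl⟩, hxe⟩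
  calc mB f Z s N ε ≤ coverSum s C :=
        iInf₂_le_of_le C hC_countable (iInf₂_le_of_le hC_length hC_cover le_rfl)
    _ ≤ ∑' k, coverSum s ((E k : Set X) ×ˢ {n k}) :=
        ENNReal.tsum_iUnion_le_tsum (fun p : X × ℕ => ENNReal.ofReal (Real.exp (-s * p.2))) _
    _ = ∑' k, ENNReal.ofReal ((E k).card * Real.exp (-s * n k)) := by
        simp only [coverSum_finset_prod_singleton]

lemma mBLim_eq_zero_of_frequently_mem_bowenBall {Z : Set X} {s : ℝ} {E : ℕ → Finset X}
    {n : ℕ → ℕ} (hn : Tendsto n atTop atTop)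
    (hsum : Summable fun k => (E k).card * Real.exp (-s * n k))
    (hZ : ∀ x ∈ Z, ∃ᶠ k in atTop, ∃ e ∈ E k, x ∈ bowenBall f e (n k) ε) :
    mBLim f Z s ε = 0 := by
  refine ENNReal.iSup_eq_zero.2 fun N => le_zero_iff.1 ?_
  have h_tail := ENNReal.tendsto_sum_nat_add _ hsum.tsum_ofReal_ne_top
  obtain ⟨k₀, hk₀⟩ := eventually_atTop.1 (hn.eventually_ge_atTop N)
  refine ge_of_tendsto h_tail ((eventually_ge_atTop k₀).mono fun k hk => ?_)
  have h_length (i : ℕ) : N ≤ n (i + k) := hk₀ (i + k) (hk.trans (Nat.le_add_left k i))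
  refine mB_le_tsum (E := fun i => E (i + k)) h_length fun x hx => ?_
  obtain ⟨j, hj, hxj⟩ := frequently_atTop.1 (hZ x hx) k
  exact ⟨j - k, by rwa [Nat.sub_add_cancel hj]⟩

lemma IsKraftCover.mBLim_eq_zero {κ : Type*} [Fintype κ] {D : κ → Set X} {ℓ : κ → ℝ} {G : X → ℝ}
    (h : IsKraftCover D ℓ G) {m : ℕ} (hm : 0 < m)
    (hD : ∀ i, ∀ y ∈ D i, ∀ z ∈ D i, z ∈ bowenBall f y m ε) {a s : ℝ} (ha : 0 ≤ a)
    (has : a < m * s) {Z : Set X}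
    (hZ : ∀ x ∈ Z, ∃ᶠ n : ℕ in atTop, birkhoffSum f G n x ≤ n * a) :
    mBLim f Z s ε = 0 := by
  choose E hE_card hE using h.exists_finset_bowenBall_cover hm hD ha
  refine mBLim_eq_zero_of_frequently_mem_bowenBall (E := E) (n := fun L => m * L)
    (tendsto_id.const_mul_atTop' hm) ?_ fun x hx => ?_
  · have h_ratio : Real.exp (a - m * s) < 1 := Real.exp_lt_one_iff.2 (sub_neg.2 has)
    refine .of_nonneg_of_le (fun L => by positivity) (fun L => ?_)
      ((summable_geometric_of_lt_one (Real.exp_nonneg _) h_ratio).mul_left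
        (m * Fintype.card κ * Real.exp a))
    calc ((E L).card : ℝ) * Real.exp (-s * (m * L : ℕ))
        ≤ m * Fintype.card κ * Real.exp ((L + 1 : ℕ) * a) * Real.exp (-s * (m * L : ℕ)) := by
          gcongr
          exact hE_card L
      _ = m * Fintype.card κ * Real.exp a * Real.exp (a - m * s) ^ L := by
          rw [← Real.exp_nat_mul, mul_assoc, mul_assoc _ (Real.exp a), ← Real.exp_add,
            ← Real.exp_add]
          push_cast
          ring_nf
  · have h_div : Tendsto (fun n => n / m) atTop atTop := Nat.tendsto_div_const_atTop hm.ne'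
    exact h_div.frequently ((hZ x hx).mono fun n hn => hE (n / m) n x rfl hn)

end BowenCovers

section EmpiricalMeasures

variable {X : Type*} [MeasurableSpace X]

lemma mul_integral_empMeasure [MeasurableSingletonClass X] (f : X → X) (x : X) (n : ℕ)
    (G : X → ℝ) : n * ∫ y, G y ∂empMeasure f x n = birkhoffSum f G n x := by
  rcases n.eq_zero_or_pos with rfl | hn
  · simp
  · have h_sum : ∫ y, G y ∂(∑ j ∈ Finset.range n, Measure.dirac (f^[j] x)) =
        birkhoffSum f G n x := by
      rw [integral_finsetSum_measure fun j _ => integrable_dirac enorm_lt_top]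
      simp [birkhoffSum]
    rw [empMeasure, max_eq_left hn, integral_smul_measure, h_sum]
    simp [hn.ne']

lemma frequently_birkhoffSum_le [MetricSpace X] [BorelSpace X] {f : X → X} {x : X}
    {μ : ProbabilityMeasure X} (hμ : μ ∈ Vf f x) (G : BoundedContinuousFunction X ℝ) {a : ℝ}
    (ha : ∫ y, G y ∂(μ : Measure X) < a) :
    ∃ᶠ n : ℕ in atTop, birkhoffSum f G n x ≤ n * a := by
  have h_nhds : ∀ᶠ ν : ProbabilityMeasure X in 𝓝 μ, ∫ y, G y ∂(ν : Measure X) < a :=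
    (ProbabilityMeasure.continuous_integral_boundedContinuousFunction G).tendsto μ
      |>.eventually_lt_const ha
  refine (hμ.frequently h_nhds).mono fun n hn => ?_
  rw [← mul_integral_empMeasure]
  exact mul_le_mul_of_nonneg_left hn.le n.cast_nonneg

end EmpiricalMeasures

section UpperBound

variable {X : Type*}

lemma hB_le_of_mBLim_eq_zero [PseudoMetricSpace X] {f : X → X} {Z : Set X} {s ε : ℝ} (hs : 0 ≤ s)
    (h : mBLim f Z s ε = 0) : hB f Z ε ≤ s := by
  by_cases h_bdd : BddBelow {s : ℝ | mBLim f Z s ε = 0}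
  · exact csInf_le h_bdd h
  · exact (Real.sInf_of_not_bddBelow h_bdd).trans_le hs

lemma isOpen_setOf_mem_bowenBall [PseudoMetricSpace X] {f : X → X} (hf : Continuous f) (n : ℕ)
    (ε : ℝ) : IsOpen {p : X × X | p.2 ∈ bowenBall f p.1 n ε} := by
  have h_inter : {p : X × X | p.2 ∈ bowenBall f p.1 n ε} =
      ⋂ i ∈ {i | i < n}, {p : X × X | dist (f^[i] p.1) (f^[i] p.2) < ε} := by
    ext p
    simp [bowenBall]
  rw [h_inter]
  exact (finite_lt_nat n).isOpen_biInter fun i _ =>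
    isOpen_lt (((hf.iterate i).comp continuous_fst).dist ((hf.iterate i).comp continuous_snd))
      continuous_const

lemma diagonal_subset_setOf_mem_bowenBall [PseudoMetricSpace X] (f : X → X) (n : ℕ) {ε : ℝ}
    (hε : 0 < ε) : diagonal X ⊆ {p : X × X | p.2 ∈ bowenBall f p.1 n ε} := by
  rintro ⟨x, y⟩ hxy i _
  obtain rfl : x = y := hxy
  simpa using hε

variable [MetricSpace X] [CompactSpace X] [MeasurableSpace X] [BorelSpace X] {f : X → X}
  {Z : Set X} {ε : ℝ} {μ : ProbabilityMeasure X}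

lemma IsPartition.hB_le_dynEnt {P : Finset (Set X)} (hP : IsPartition (μ : Measure X) P)
    (hPε : partDiamLt P ε) (hf : Continuous f) (hμ : MeasurePreserving f (μ : Measure X) μ)
    (hZ : ∀ x ∈ Z, μ ∈ Vf f x) : hB f Z ε ≤ dynEnt μ f P := by
  have hε : 0 < ε := let ⟨A, hA⟩ := hP.nonempty; Metric.diam_nonneg.trans_lt (hPε A hA)
  refine le_of_forall_gt_imp_ge_of_dense fun s hs => ?_
  obtain ⟨m, hm, hms⟩ := hP.exists_partEnt_dynJoin_lt hμ hs
  obtain ⟨a, hma, has⟩ := exists_between hms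
  have ha : 0 ≤ a := (partEnt_nonneg _ _).trans hma.le
  have hs0 : 0 ≤ s := (pos_of_mul_pos_right (ha.trans_lt has) m.cast_nonneg).le
  obtain ⟨κ, _, D, ℓ, G, hG, hDO, hGa⟩ :=
    (isPartition_dynJoin hμ hP m).exists_isKraftCover_integral_lt
      (isOpen_setOf_mem_bowenBall hf m ε) (diagonal_subset_setOf_mem_bowenBall f m hε)
      (fun C hC p hp => mem_bowenBall_of_mem_dynJoin hPε hC hp.1 hp.2) hma
  exact hB_le_of_mBLim_eq_zero hs0 <| hG.mBLim_eq_zero hm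
    (fun i y hy z hz => hDO i (mk_mem_prod hy hz)) ha has
    fun x hx => frequently_birkhoffSum_le (hZ x hx) (.mkOfCompact G) hGa

lemma hB_le_infEnt (hf : Continuous f) (hε : 0 < ε) (hμ : μ ∈ invSet f)
    (hZ : ∀ x ∈ Z, μ ∈ Vf f x) : hB f Z ε ≤ infEnt μ f ε := by
  have : Nonempty X := nonempty_of_isProbabilityMeasure (μ : Measure X)
  have h_ne : {P : Finset (Set X) | IsPartition (μ : Measure X) P ∧ partDiamLt P ε}.Nonempty :=
    exists_isPartition_partDiamLt (μ : Measure X) hε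
  refine le_csInf (h_ne.image _) ?_
  rintro _ ⟨P, ⟨hP, hPε⟩, rfl⟩
  exact hP.hB_le_dynEnt hPε hf ⟨hf.measurable, hμ⟩ hZ

end UpperBound

end MMD

theorem stmt13_general {X : Type*} [MetricSpace X] [CompactSpace X]
    [MeasurableSpace X] [BorelSpace X]
    (f : X → X) (hf : Continuous f)
    (K : Set (ProbabilityMeasure X)) (hKne : K.Nonempty) (hKsub : K ⊆ invSet f)
    (Z : Set X) (hZ : ∀ x ∈ Z, K ⊆ Vf f x)
    (ε : ℝ) (hε : 0 < ε) :
    hB f Z ε ≤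
      sInf ((fun ν : ProbabilityMeasure X => infEnt (ν : Measure X) f ε) '' K) := by
  refine le_csInf (hKne.image _) ?_
  rintro _ ⟨μ, hμ, rfl⟩
  exact hB_le_infEnt hf hε (hKsub hμ) fun x hx => hZ x hx hμ

theorem stmt13 {X : Type*} [MetricSpace X] [CompactSpace X] [Nonempty X]
    [MeasurableSpace X] [BorelSpace X]
    (f : X → X) (hf : Continuous f)
    (K : Set (ProbabilityMeasure X)) (hKne : K.Nonempty) (hKcomp : IsCompact K)
    (hKconn : IsConnected K) (hKsub : K ⊆ invSet f)
    (ε : ℝ) (hε : 0 < ε) :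
    hB f (GK f K) ε ≤
      sInf ((fun ν : ProbabilityMeasure X => infEnt (ν : Measure X) f ε) '' K) :=
  stmt13_general f hf K hKne hKsub (GK f K) (fun _ hx => hx.ge) ε hε

end
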